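/- arXiv:1802.04411 — 3 statements merged into one kernel-verified Lean document; each statement's English description precedes it below -/
import Mathlib

section
/- Let p > 1 and let p′ = p/(p−1) be its conjugate exponent. Then for all real numbers a and b, (a − b)·(|a|^{p−1} sgn(a) − |b|^{p−1} sgn(b)) ≥ 2·min(1/p, 1/p′)·(|a|^{p/2} sgn(a) − |b|^{p/2} sgn(b))². -/
open Real

/-!
Write `φ_r(x) = |x|^r sgn x`, so that `φ_r / r` is a primitive of `|x|^(r-1)`. For `α, β > 0`,
`γ = (α+β)/2` and every real `t`, the function `t² φ_α/α - 2t φ_γ/γ + φ_β/β` has derivative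
`(t |x|^((α-1)/2) - |x|^((β-1)/2))² ≥ 0` away from `0`, so it is monotone. Its increment between
two points is a quadratic polynomial in `t` of constant sign, so its discriminant is nonpositive:
this bounds the square of the increment of `φ_γ` by the product of those of `φ_α` and `φ_β`.
For `α = 1` and `β = p - 1` the resulting constant is `4/(p p')`, and this is at least
`2 min(1/p, 1/p')` because `1/p + 1/p' = 1` forces `max(1/p, 1/p') ≥ 1/2`.
-/

/-- The signed power `|x| ^ r * sgn x`: the odd extension of the power function from the positive
half-line, which lets the inequality be proved without distinguishing the signs of `a` and `b`. -/
noncomputable def signedRpow (r x : ℝ) : ℝ :=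
  |x| ^ r * Real.sign x

theorem signedRpow_neg (r x : ℝ) : signedRpow r (-x) = -signedRpow r x := by
  simp only [signedRpow, abs_neg, Real.sign_neg, mul_neg]

theorem signedRpow_of_nonneg {r x : ℝ} (hr : r ≠ 0) (hx : 0 ≤ x) : signedRpow r x = x ^ r := by
  rcases hx.eq_or_lt with rfl | hx
  · simp only [signedRpow, Real.sign_zero, mul_zero, zero_rpow hr]
  · rw [signedRpow, abs_of_pos hx, Real.sign_of_pos hx, mul_one]

theorem signedRpow_one (x : ℝ) : signedRpow 1 x = x := by
  rcases le_total 0 x with hx | hx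
  · rw [signedRpow_of_nonneg one_ne_zero hx, rpow_one]
  · rw [← neg_neg x, signedRpow_neg, signedRpow_of_nonneg one_ne_zero (neg_nonneg.2 hx), rpow_one]

theorem hasDerivAt_rpow_div_exponent {r x : ℝ} (hr : r ≠ 0) (hx : x ≠ 0) :
    HasDerivAt (fun y : ℝ ↦ y ^ r / r) (x ^ (r - 1)) x := by
  simpa only [mul_div_cancel_left₀ _ hr] using
    (hasDerivAt_rpow_const (p := r) (Or.inl hx)).div_const r

theorem sq_mul_rpow_sub_rpow {x : ℝ} (hx : 0 < x) (α β t : ℝ) :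
    (t * x ^ ((α - 1) / 2) - x ^ ((β - 1) / 2)) ^ 2 =
      t ^ 2 * x ^ (α - 1) - 2 * t * x ^ ((α + β) / 2 - 1) + x ^ (β - 1) := by
  have h_sq (r : ℝ) : (x ^ (r / 2)) ^ 2 = x ^ r := by
    rw [← rpow_mul_natCast hx.le, Nat.cast_ofNat, div_mul_cancel₀ _ two_ne_zero]
  have h_cross : x ^ ((α - 1) / 2) * x ^ ((β - 1) / 2) = x ^ ((α + β) / 2 - 1) := by
    rw [← rpow_add hx]
    ring_nf
  rw [sub_sq, mul_pow, h_sq, h_sq, ← h_cross]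
  ring

section TwoExponents

variable {α β : ℝ}

theorem monotoneOn_rpow_quadratic (hα : 0 < α) (hβ : 0 < β) (t : ℝ) :
    MonotoneOn (fun x : ℝ ↦
      t ^ 2 * (x ^ α / α) - 2 * t * (x ^ ((α + β) / 2) / ((α + β) / 2)) + x ^ β / β)
      (Set.Ici 0) := by
  have hγ : 0 < (α + β) / 2 := by positivity
  refine monotoneOn_of_hasDerivWithinAt_nonneg (convex_Ici 0)
    (f' := fun x ↦ (t * x ^ ((α - 1) / 2) - x ^ ((β - 1) / 2)) ^ 2) ?_ ?_ fun _ _ ↦ sq_nonneg _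
  · have h_cont {r : ℝ} (hr : 0 < r) : Continuous fun x : ℝ ↦ x ^ r / r :=
      (continuous_rpow_const hr.le).div_const r
    exact ((((h_cont hα).const_mul _).sub ((h_cont hγ).const_mul _)).add (h_cont hβ)).continuousOn
  · intro x hx
    have hx : 0 < x := by simpa only [interior_Ici, Set.mem_Ioi] using hx
    have h_deriv {r : ℝ} (hr : 0 < r) := hasDerivAt_rpow_div_exponent hr.ne' hx.ne'
    rw [sq_mul_rpow_sub_rpow hx]
    exact ((((h_deriv hα).const_mul _).sub ((h_deriv hγ).const_mul _)).add
      (h_deriv hβ)).hasDerivWithinAt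

theorem monotone_signedRpow_quadratic (hα : 0 < α) (hβ : 0 < β) (t : ℝ) :
    Monotone fun x ↦ t ^ 2 * (signedRpow α x / α) -
      2 * t * (signedRpow ((α + β) / 2) x / ((α + β) / 2)) + signedRpow β x / β := by
  have hγ : 0 < (α + β) / 2 := by positivity
  refine monotone_of_odd_of_monotoneOn_nonneg (fun x ↦ ?_)
    ((monotoneOn_rpow_quadratic hα hβ t).congr fun x hx ↦ ?_)
  · simp only [signedRpow_neg]
    ring
  · simp only [signedRpow_of_nonneg hα.ne' hx, signedRpow_of_nonneg hβ.ne' hx,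
      signedRpow_of_nonneg hγ.ne' hx]

theorem stmt2_general (hα : 0 < α) (hβ : 0 < β) (a b : ℝ) :
    4 * (α * β) / (α + β) ^ 2 *
        (signedRpow ((α + β) / 2) a - signedRpow ((α + β) / 2) b) ^ 2 ≤
      (signedRpow α a - signedRpow α b) * (signedRpow β a - signedRpow β b) := by
  wlog hab : b ≤ a generalizing a b
  · linarith [this b a (le_of_not_ge hab)]
  set u := signedRpow α a - signedRpow α b with hu
  set v := signedRpow β a - signedRpow β b with hv
  set w := signedRpow ((α + β) / 2) a - signedRpow ((α + β) / 2) b with hw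
  have h_quadratic (t : ℝ) : 0 ≤ u / α * (t * t) + -(4 * w / (α + β)) * t + v / β := by
    have h_increment := sub_nonneg.2 (monotone_signedRpow_quadratic hα hβ t hab)
    refine h_increment.trans_eq ?_
    simp only [hu, hv, hw]
    field
  have h_discrim : (4 * w / (α + β)) ^ 2 ≤ 4 * (u / α) * (v / β) := by
    simpa only [discrim, neg_sq, sub_nonpos] using discrim_le_zero h_quadratic
  calc 4 * (α * β) / (α + β) ^ 2 * w ^ 2
      = α * β / 4 * (4 * w / (α + β)) ^ 2 := by field
    _ ≤ α * β / 4 * (4 * (u / α) * (v / β)) := by gcongr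
    _ = u * v := by field

end TwoExponents

theorem min_le_two_mul_mul {u v : ℝ} (hu : 0 ≤ u) (hv : 0 ≤ v) (huv : u + v = 1) :
    min u v ≤ 2 * (u * v) := by
  have h_max : 1 ≤ 2 * max u v := by linarith [le_max_left u v, le_max_right u v]
  calc min u v ≤ min u v * (2 * max u v) := le_mul_of_one_le_right (le_min hu hv) h_max
    _ = 2 * (u * v) := by rw [mul_left_comm, min_mul_max]

theorem two_mul_min_one_div_conjExponent_le {p : ℝ} (hp : 1 < p) :
    2 * min (1 / p) (1 / (p / (p - 1))) ≤ 4 * (p - 1) / p ^ 2 := by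
  have hp1 : 0 < p - 1 := sub_pos.2 hp
  have h_conj : 1 / p + 1 / (p / (p - 1)) = 1 := by field
  calc 2 * min (1 / p) (1 / (p / (p - 1)))
      ≤ 2 * (2 * (1 / p * (1 / (p / (p - 1))))) := by
        gcongr
        exact min_le_two_mul_mul (by positivity) (by positivity) h_conj
    _ = 4 * (p - 1) / p ^ 2 := by field

/-- Elementary two-point inequality: for `p > 1` with conjugate exponent
`p' = p/(p-1)`, and all reals `a, b`,
`(a-b)(|a|^{p-1} sgn a - |b|^{p-1} sgn b) ≥ 2 min(1/p, 1/p') (|a|^{p/2} sgn a - |b|^{p/2} sgn b)²`. -/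
theorem stmt2 (p : ℝ) (hp : 1 < p) (a b : ℝ) :
    (a - b) * (|a| ^ (p - 1) * Real.sign a - |b| ^ (p - 1) * Real.sign b) ≥
      2 * min (1 / p) (1 / (p / (p - 1))) *
        (|a| ^ (p / 2) * Real.sign a - |b| ^ (p / 2) * Real.sign b) ^ 2 := by
  have h_sharp := stmt2_general one_pos (sub_pos.2 hp) a b
  rw [signedRpow_one, signedRpow_one, add_sub_cancel, one_mul] at h_sharp
  exact (mul_le_mul_of_nonneg_right (two_mul_min_one_div_conjExponent_le hp)
    (sq_nonneg _)).trans h_sharp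
end

section
/- Let k ∈ ℕ, let n ∈ ℕ, and let f : C_n → ℝ have Fourier coefficients satisfying f̂(S) = 0 whenever |S| > k (i.e., f has degree at most k). Then ‖f‖₄ ≤ 3^{3k/2} ‖f‖₁. -/
open Finset MeasureTheory Real

noncomputable section

/-- Expectation on the Hamming cube `{-1,1}^n`, modeled as `Fin n → Bool`
(`true ↔ 1`, `false ↔ -1`), with the uniform probability measure. -/
def cubeE {n : ℕ} (f : (Fin n → Bool) → ℝ) : ℝ :=
  (∑ x : Fin n → Bool, f x) / 2 ^ n

/-- The Walsh monomial `x^S = ∏_{i ∈ S} x_i`. -/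
def walsh {n : ℕ} (S : Finset (Fin n)) (x : Fin n → Bool) : ℝ :=
  ∏ i ∈ S, (if x i then (1 : ℝ) else -1)

/-- Fourier coefficient `f̂(S) = E (f · x^S)`. -/
def cubeFourier {n : ℕ} (f : (Fin n → Bool) → ℝ) (S : Finset (Fin n)) : ℝ :=
  cubeE fun x => f x * walsh S x

/-- The heat semigroup `e^{tΔ} f = Σ_S e^{-t|S|} f̂(S) x^S`. -/
def heat1 {n : ℕ} (t : ℝ) (f : (Fin n → Bool) → ℝ) : (Fin n → Bool) → ℝ :=
  fun x => ∑ S : Finset (Fin n), Real.exp (-t * (S.card : ℝ)) * cubeFourier f S * walsh S x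

/-- The fractional heat semigroup `e^{tΔ_γ} f = Σ_S e^{-t|S|^γ} f̂(S) x^S`. -/
def heatFrac {n : ℕ} (γ t : ℝ) (f : (Fin n → Bool) → ℝ) : (Fin n → Bool) → ℝ :=
  fun x => ∑ S : Finset (Fin n), Real.exp (-t * (S.card : ℝ) ^ γ) * cubeFourier f S * walsh S x

/-- The Laplacian `Δf = -Σ_S |S| f̂(S) x^S`. -/
def lap {n : ℕ} (f : (Fin n → Bool) → ℝ) : (Fin n → Bool) → ℝ :=
  fun x => -∑ S : Finset (Fin n), (S.card : ℝ) * cubeFourier f S * walsh S x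

/-- The fractional Laplacian `Δ_γ f = -Σ_S |S|^γ f̂(S) x^S`. -/
def fracLap {n : ℕ} (γ : ℝ) (f : (Fin n → Bool) → ℝ) : (Fin n → Bool) → ℝ :=
  fun x => -∑ S : Finset (Fin n), (S.card : ℝ) ^ γ * cubeFourier f S * walsh S x

/-- The discrete partial derivative `∇_j f`. -/
def cubeGrad {n : ℕ} (j : Fin n) (f : (Fin n → Bool) → ℝ) (x : Fin n → Bool) : ℝ :=
  (f (Function.update x j true) - f (Function.update x j false)) / 2

/-- The squared length of the discrete gradient, `|∇f|²(x) = Σ_j |∇_j f(x)|²`. -/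
def gradSq {n : ℕ} (f : (Fin n → Bool) → ℝ) (x : Fin n → Bool) : ℝ :=
  ∑ j : Fin n, (cubeGrad j f x) ^ 2

/-- The `L^p` norm `‖f‖_p = (E|f|^p)^{1/p}` on the Hamming cube. -/
def pNorm {n : ℕ} (p : ℝ) (f : (Fin n → Bool) → ℝ) : ℝ :=
  (cubeE fun x => |f x| ^ p) ^ (1 / p)

/-!
Bonami's lemma `‖f‖₄ ≤ 3^{k/2} ‖f‖₂` is proved by induction on the dimension. Writing
`f = g + x₀ h` with `g` and `h` independent of `x₀`, one has `E f² = E g² + E h²` and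
`E f⁴ = E g⁴ + 6 E g²h² + E h⁴`. Since `h` has degree at most `k - 1`, its constant is `9` times
smaller than that of `g`, which is just enough for Cauchy–Schwarz to absorb the factor `6` of the
mixed term. The passage from `‖·‖₂` to `‖·‖₁` is self-improvement: interpolating `‖f‖₂` between
`‖f‖₁` and `‖f‖₄` turns `‖f‖₄ ≤ c ‖f‖₂` into `‖f‖₄ ≤ c³ ‖f‖₁`.
-/

open scoped BigOperators

section Averages

variable {ι : Type*} (s : Finset ι)

lemma expect_abs_rpow_lyapunov (f : ι → ℝ) {p q r : ℝ} (hp : 0 ≤ p) (hpq : p < q) (hqr : q ≤ r) :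
    (𝔼 i ∈ s, |f i| ^ q) ^ (r - p) ≤
      (𝔼 i ∈ s, |f i| ^ p) ^ (r - q) * (𝔼 i ∈ s, |f i| ^ r) ^ (q - p) := by
  have hqp : 0 < q - p := sub_pos.2 hpq
  have hrp : 0 < r - p := by linarith
  have moment_nonneg (t : ℝ) : 0 ≤ 𝔼 i ∈ s, |f i| ^ t := expect_nonneg fun i _ ↦ by positivity
  have rpow_split {t u : ℝ} (ht : p ≤ t) (hu : p + u = t) (i : ι) :
      |f i| ^ p * |f i| ^ u = |f i| ^ t := by
    rw [← rpow_add_of_nonneg (abs_nonneg _) hp (by linarith), hu]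
  have holder : 𝔼 i ∈ s, |f i| ^ q ≤
      (𝔼 i ∈ s, |f i| ^ p) ^ ((r - q) / (r - p)) * (𝔼 i ∈ s, |f i| ^ r) ^ ((q - p) / (r - p)) := by
    have h := compact_inner_le_weight_mul_Lp_of_nonneg s (p := (r - p) / (q - p))
      (w := fun i ↦ |f i| ^ p) (f := fun i ↦ |f i| ^ (q - p))
      ((one_le_div hqp).2 (by linarith)) (fun i ↦ by positivity) (fun i ↦ by positivity)
    simp only [← rpow_mul (abs_nonneg _), mul_div_cancel₀ _ hqp.ne', inv_div] at h
    simp only [rpow_split hpq.le (add_sub_cancel p q),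
      rpow_split (hpq.le.trans hqr) (add_sub_cancel p r)] at h
    rwa [one_sub_div hrp.ne', sub_sub_sub_cancel_right] at h
  calc (𝔼 i ∈ s, |f i| ^ q) ^ (r - p)
      ≤ ((𝔼 i ∈ s, |f i| ^ p) ^ ((r - q) / (r - p)) *
          (𝔼 i ∈ s, |f i| ^ r) ^ ((q - p) / (r - p))) ^ (r - p) :=
        rpow_le_rpow (moment_nonneg q) holder hrp.le
    _ = (𝔼 i ∈ s, |f i| ^ p) ^ (r - q) * (𝔼 i ∈ s, |f i| ^ r) ^ (q - p) := by
        rw [mul_rpow (rpow_nonneg (moment_nonneg p) _) (rpow_nonneg (moment_nonneg r) _),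
          ← rpow_mul (moment_nonneg p), ← rpow_mul (moment_nonneg r),
          div_mul_cancel₀ _ hrp.ne', div_mul_cancel₀ _ hrp.ne']

lemma expect_sq_mul_sq_le (g h : ι → ℝ) {A B : ℝ} (hA : 0 ≤ A) (hB : 0 ≤ B)
    (hg : 𝔼 i ∈ s, g i ^ 4 ≤ A ^ 2) (hh : 𝔼 i ∈ s, h i ^ 4 ≤ B ^ 2) :
    𝔼 i ∈ s, g i ^ 2 * h i ^ 2 ≤ A * B := by
  refine le_of_sq_le_sq ?_ (mul_nonneg hA hB)
  calc (𝔼 i ∈ s, g i ^ 2 * h i ^ 2) ^ 2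
      ≤ (𝔼 i ∈ s, (g i ^ 2) ^ 2) * 𝔼 i ∈ s, (h i ^ 2) ^ 2 := expect_mul_sq_le_sq_mul_sq s _ _
    _ = (𝔼 i ∈ s, g i ^ 4) * 𝔼 i ∈ s, h i ^ 4 := by simp only [← pow_mul, Nat.reduceMul]
    _ ≤ A ^ 2 * B ^ 2 := by
        gcongr
    _ = (A * B) ^ 2 := by ring

lemma expect_pow_four_add_le_sq (g h : ι → ℝ) {c : ℝ} (hc : 0 ≤ c)
    (hg : 𝔼 i ∈ s, g i ^ 4 ≤ (c * 𝔼 i ∈ s, g i ^ 2) ^ 2)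
    (hh : 𝔼 i ∈ s, h i ^ 4 ≤ (c / 3 * 𝔼 i ∈ s, h i ^ 2) ^ 2) :
    𝔼 i ∈ s, (g i ^ 4 + 6 * (g i ^ 2 * h i ^ 2) + h i ^ 4) ≤
      (c * 𝔼 i ∈ s, (g i ^ 2 + h i ^ 2)) ^ 2 := by
  simp only [expect_add_distrib, ← mul_expect]
  set G := 𝔼 i ∈ s, g i ^ 2
  set H := 𝔼 i ∈ s, h i ^ 2
  have hG : 0 ≤ G := expect_nonneg fun i _ ↦ sq_nonneg _
  have hH : 0 ≤ H := expect_nonneg fun i _ ↦ sq_nonneg _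
  have mixed : 𝔼 i ∈ s, g i ^ 2 * h i ^ 2 ≤ c * G * (c / 3 * H) :=
    expect_sq_mul_sq_le s g h (mul_nonneg hc hG) (mul_nonneg (by positivity) hH) hg hh
  calc 𝔼 i ∈ s, g i ^ 4 + 6 * 𝔼 i ∈ s, g i ^ 2 * h i ^ 2 + 𝔼 i ∈ s, h i ^ 4
      ≤ (c * G) ^ 2 + 6 * (c * G * (c / 3 * H)) + (c / 3 * H) ^ 2 := by gcongr
    _ = (c * (G + H)) ^ 2 - 8 / 9 * (c * H) ^ 2 := by ring
    _ ≤ (c * (G + H)) ^ 2 := sub_le_self _ (by positivity)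

end Averages

lemma cubeE_eq_expect {n : ℕ} (f : (Fin n → Bool) → ℝ) : cubeE f = 𝔼 x, f x := by
  simp [cubeE, Fintype.expect_eq_sum_div_card]

lemma cubeE_of_dim_zero (f : (Fin 0 → Bool) → ℝ) (x : Fin 0 → Bool) : cubeE f = f x := by
  rw [cubeE_eq_expect, univ_unique, expect_singleton]
  exact congrArg f (Subsingleton.elim _ _)

section Restriction

variable {n : ℕ}

/-- The part `g` of the decomposition `f = g + x₀ h` along the first coordinate: the mean of `f`
over `x₀`. -/
def headMean (f : (Fin (n + 1) → Bool) → ℝ) (y : Fin n → Bool) : ℝ :=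
  (f (Fin.cons true y) + f (Fin.cons false y)) / 2

/-- The part `h` of the decomposition `f = g + x₀ h` along the first coordinate: the discrete
derivative `∇₀ f`, viewed as a function of the remaining coordinates. -/
def headGrad (f : (Fin (n + 1) → Bool) → ℝ) (y : Fin n → Bool) : ℝ :=
  (f (Fin.cons true y) - f (Fin.cons false y)) / 2

lemma apply_cons_eq_headMean_add_headGrad (f : (Fin (n + 1) → Bool) → ℝ) (b : Bool)
    (y : Fin n → Bool) :
    f (Fin.cons b y) = headMean f y + (if b then 1 else -1) * headGrad f y := by
  cases b <;> simp only [headMean, headGrad, if_true, Bool.false_eq_true, if_false] <;> ring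

lemma cubeE_eq_expect_headMean (f : (Fin (n + 1) → Bool) → ℝ) :
    cubeE f = 𝔼 y, headMean f y := by
  rw [← cubeE_eq_expect, cubeE, cubeE, ← (Fin.consEquiv fun _ ↦ Bool).sum_comp f,
    Fintype.sum_prod_type_right]
  simp only [Fintype.sum_bool, headMean, ← sum_div, pow_succ]
  exact div_mul_eq_div_div_swap _ _ _

lemma cubeE_sq_eq_expect (f : (Fin (n + 1) → Bool) → ℝ) :
    cubeE (fun x ↦ f x ^ 2) = 𝔼 y, (headMean f y ^ 2 + headGrad f y ^ 2) := by
  rw [cubeE_eq_expect_headMean]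
  refine expect_congr rfl fun y _ ↦ ?_
  simp only [headMean, headGrad]
  ring

lemma cubeE_pow_four_eq_expect (f : (Fin (n + 1) → Bool) → ℝ) :
    cubeE (fun x ↦ f x ^ 4) =
      𝔼 y, (headMean f y ^ 4 + 6 * (headMean f y ^ 2 * headGrad f y ^ 2) + headGrad f y ^ 4) := by
  rw [cubeE_eq_expect_headMean]
  refine expect_congr rfl fun y _ ↦ ?_
  simp only [headMean, headGrad]
  ring

lemma walsh_map_succ_cons (S : Finset (Fin n)) (b : Bool) (y : Fin n → Bool) :
    walsh (S.map (Fin.succEmb n)) (Fin.cons b y : Fin (n + 1) → Bool) = walsh S y := by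
  simp [walsh]

lemma walsh_insert_zero_cons (S : Finset (Fin n)) (b : Bool) (y : Fin n → Bool) :
    walsh (insert 0 (S.map (Fin.succEmb n))) (Fin.cons b y : Fin (n + 1) → Bool) =
      (if b then 1 else -1) * walsh S y := by
  rw [← walsh_map_succ_cons S b y, walsh, prod_insert (by simp), Fin.cons_zero, walsh]

lemma cubeFourier_headMean (f : (Fin (n + 1) → Bool) → ℝ) (S : Finset (Fin n)) :
    cubeFourier (headMean f) S = cubeFourier f (S.map (Fin.succEmb n)) := by
  rw [cubeFourier, cubeFourier, cubeE_eq_expect, cubeE_eq_expect_headMean]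
  refine expect_congr rfl fun y _ ↦ ?_
  simp only [headMean, walsh_map_succ_cons]
  ring

lemma cubeFourier_headGrad (f : (Fin (n + 1) → Bool) → ℝ) (S : Finset (Fin n)) :
    cubeFourier (headGrad f) S = cubeFourier f (insert 0 (S.map (Fin.succEmb n))) := by
  rw [cubeFourier, cubeFourier, cubeE_eq_expect, cubeE_eq_expect_headMean]
  refine expect_congr rfl fun y _ ↦ ?_
  simp only [headMean, headGrad, walsh_insert_zero_cons, if_true, Bool.false_eq_true, if_false]
  ring

end Restriction

lemma eq_zero_of_cubeFourier_eq_zero {n : ℕ} {f : (Fin n → Bool) → ℝ}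
    (hf : ∀ S, cubeFourier f S = 0) : f = 0 := by
  induction n with
  | zero =>
    funext x
    simpa [cubeFourier, cubeE_of_dim_zero _ x, walsh] using hf ∅
  | succ n ih =>
    have hmean : headMean f = 0 := ih fun S ↦ by rw [cubeFourier_headMean, hf]
    have hgrad : headGrad f = 0 := ih fun S ↦ by rw [cubeFourier_headGrad, hf]
    funext x
    rw [← Fin.cons_self_tail x, apply_cons_eq_headMean_add_headGrad f, hmean, hgrad]
    simp

/-- `f` has degree at most `k` as a multilinear polynomial: its Fourier coefficients of order
greater than `k` vanish. -/
def HasDegreeLE {n : ℕ} (k : ℕ) (f : (Fin n → Bool) → ℝ) : Prop :=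
  ∀ S : Finset (Fin n), k < S.card → cubeFourier f S = 0

namespace HasDegreeLE

variable {n k : ℕ} {f : (Fin (n + 1) → Bool) → ℝ}

lemma headMean (hf : HasDegreeLE k f) : HasDegreeLE k (headMean f) := fun S hS ↦ by
  rw [cubeFourier_headMean]
  exact hf _ (by rwa [card_map])

lemma headGrad (hf : HasDegreeLE (k + 1) f) : HasDegreeLE k (headGrad f) := fun S hS ↦ by
  rw [cubeFourier_headGrad]
  exact hf _ (by rw [card_insert_of_notMem (by simp), card_map]; omega)

lemma headGrad_eq_zero (hf : HasDegreeLE 0 f) : _root_.headGrad f = 0 :=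
  eq_zero_of_cubeFourier_eq_zero fun S ↦ by
    rw [cubeFourier_headGrad]
    exact hf _ (card_pos.2 (insert_nonempty _ _))

end HasDegreeLE

lemma cubeE_pow_four_le_sq {n k : ℕ} {f : (Fin n → Bool) → ℝ} (hf : HasDegreeLE k f) :
    cubeE (fun x ↦ f x ^ 4) ≤ (3 ^ k * cubeE fun x ↦ f x ^ 2) ^ 2 := by
  induction n generalizing k with
  | zero =>
    have h3 : (1 : ℝ) ≤ (3 ^ k) ^ 2 := one_le_pow₀ (one_le_pow₀ (by norm_num))
    rw [cubeE_of_dim_zero _ default, cubeE_of_dim_zero _ default, mul_pow, ← pow_mul (f default)]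
    exact le_mul_of_one_le_left (by positivity) h3
  | succ n ih =>
    have hmean := ih hf.headMean
    have hgrad : cubeE (fun y ↦ headGrad f y ^ 4) ≤
        (3 ^ k / 3 * cubeE fun y ↦ headGrad f y ^ 2) ^ 2 := by
      cases k with
      | zero => simp [hf.headGrad_eq_zero, cubeE]
      | succ k => simpa [pow_succ] using ih hf.headGrad
    rw [cubeE_pow_four_eq_expect, cubeE_sq_eq_expect]
    simp only [cubeE_eq_expect] at hmean hgrad
    exact expect_pow_four_add_le_sq univ _ _ (by positivity) hmean hgrad

section PNorm

variable {n : ℕ} (f : (Fin n → Bool) → ℝ)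

lemma pNorm_nonneg (p : ℝ) : 0 ≤ pNorm p f := by
  rw [pNorm, cubeE_eq_expect]
  exact rpow_nonneg (expect_nonneg fun x _ ↦ by positivity) _

lemma pNorm_rpow_self {p : ℝ} (hp : p ≠ 0) : pNorm p f ^ p = 𝔼 x, |f x| ^ p := by
  rw [pNorm, one_div, cubeE_eq_expect]
  exact rpow_inv_rpow (expect_nonneg fun x _ ↦ by positivity) hp

lemma pNorm_pow_of_even {m : ℕ} (hm : Even m) (hm0 : m ≠ 0) :
    pNorm m f ^ m = cubeE fun x ↦ f x ^ m := by
  rw [← rpow_natCast, pNorm_rpow_self f (Nat.cast_ne_zero.2 hm0), cubeE_eq_expect]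
  simp only [rpow_natCast, hm.pow_abs]

lemma pNorm_rpow_interpolation {p q r : ℝ} (hp : 0 < p) (hpq : p < q) (hqr : q ≤ r) :
    pNorm q f ^ (q * (r - p)) ≤ pNorm p f ^ (p * (r - q)) * pNorm r f ^ (r * (q - p)) := by
  have hq : 0 < q := hp.trans hpq
  rw [rpow_mul (pNorm_nonneg f q), rpow_mul (pNorm_nonneg f p), rpow_mul (pNorm_nonneg f r),
    pNorm_rpow_self f hp.ne', pNorm_rpow_self f hq.ne', pNorm_rpow_self f (hq.trans_le hqr).ne']
  exact expect_abs_rpow_lyapunov univ f hp.le hpq hqr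

variable {f}

lemma pNorm_le_rpow_mul_pNorm_of_le {p q r c : ℝ} (hp : 0 < p) (hpq : p < q) (hqr : q < r)
    (hc : 0 ≤ c) (h : pNorm r f ≤ c * pNorm q f) :
    pNorm r f ≤ c ^ (q * (r - p) / (p * (r - q))) * pNorm p f := by
  have hNp := pNorm_nonneg f p
  have hNq := pNorm_nonneg f q
  rcases (pNorm_nonneg f r).eq_or_lt with hNr | hNr
  · rw [← hNr]
    positivity
  have ha : 0 < p * (r - q) := mul_pos hp (sub_pos.2 hqr)
  have hb : 0 < q * (r - p) := mul_pos (hp.trans hpq) (by linarith)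
  have hsplit : q * (r - p) = p * (r - q) + r * (q - p) := by ring
  have hmul : pNorm r f ^ (p * (r - q)) * pNorm r f ^ (r * (q - p)) ≤
      c ^ (q * (r - p)) * pNorm p f ^ (p * (r - q)) * pNorm r f ^ (r * (q - p)) := by
    calc pNorm r f ^ (p * (r - q)) * pNorm r f ^ (r * (q - p))
        = pNorm r f ^ (q * (r - p)) := by rw [← rpow_add hNr, hsplit]
      _ ≤ (c * pNorm q f) ^ (q * (r - p)) := rpow_le_rpow hNr.le h hb.le
      _ = c ^ (q * (r - p)) * pNorm q f ^ (q * (r - p)) := mul_rpow hc hNq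
      _ ≤ c ^ (q * (r - p)) * (pNorm p f ^ (p * (r - q)) * pNorm r f ^ (r * (q - p))) := by
          gcongr
          exact pNorm_rpow_interpolation f hp hpq hqr.le
      _ = _ := (mul_assoc _ _ _).symm
  rw [← rpow_le_rpow_iff hNr.le (by positivity) ha, mul_rpow (by positivity) hNp, ← rpow_mul hc,
    div_mul_cancel₀ _ ha.ne']
  exact le_of_mul_le_mul_right hmul (by positivity)

theorem pNorm_four_le_pNorm_two {k : ℕ} (hf : HasDegreeLE k f) :
    pNorm 4 f ≤ 3 ^ ((k : ℝ) / 2) * pNorm 2 f := by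
  have h4 : pNorm 4 f ^ 4 = cubeE fun x ↦ f x ^ 4 :=
    mod_cast pNorm_pow_of_even f (m := 4) (by decide) (by decide)
  have h2 : pNorm 2 f ^ 2 = cubeE fun x ↦ f x ^ 2 :=
    mod_cast pNorm_pow_of_even f (m := 2) (by decide) (by decide)
  have hsq : ((3 : ℝ) ^ ((k : ℝ) / 2)) ^ 2 = 3 ^ k := by
    rw [← rpow_mul_natCast (by norm_num), Nat.cast_ofNat, div_mul_cancel₀ _ two_ne_zero,
      rpow_natCast]
  have hN2 := pNorm_nonneg f 2
  refine (pow_le_pow_iff_left₀ (pNorm_nonneg f 4) (by positivity) four_ne_zero).1 ?_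
  calc pNorm 4 f ^ 4 ≤ (3 ^ k * pNorm 2 f ^ 2) ^ 2 := by
        rw [h4, h2]
        exact cubeE_pow_four_le_sq hf
    _ = (3 ^ ((k : ℝ) / 2) * pNorm 2 f) ^ 4 := by
        rw [← hsq]
        ring

end PNorm

/-- Consequence of the Bonami lemma: if `f : C_n → ℝ` has degree at most `k`
(i.e. `f̂(S) = 0` for `|S| > k`), then `‖f‖₄ ≤ 3^{3k/2} ‖f‖₁`. -/
theorem stmt9 (k n : ℕ) (f : (Fin n → Bool) → ℝ)
    (hband : ∀ S : Finset (Fin n), k < S.card → cubeFourier f S = 0) :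
    pNorm 4 f ≤ (3 : ℝ) ^ (3 * (k : ℝ) / 2) * pNorm 1 f := by
  have bonami : pNorm 4 f ≤ 3 ^ ((k : ℝ) / 2) * pNorm 2 f := pNorm_four_le_pNorm_two hband
  calc pNorm 4 f
      ≤ (3 ^ ((k : ℝ) / 2)) ^ ((2 * (4 - 1) / (1 * (4 - 2)) : ℝ)) * pNorm 1 f :=
        pNorm_le_rpow_mul_pNorm_of_le one_pos one_lt_two (by norm_num) (by positivity) bonami
    _ = 3 ^ (3 * (k : ℝ) / 2) * pNorm 1 f := by
        rw [← rpow_mul (by norm_num)]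
        ring_nf
end
end

section
/- Let 0 < γ < 1. There exists a constant c_γ > 0, depending only on γ, such that for every n ∈ ℕ, every f : C_n → ℝ whose Fourier coefficients satisfy f̂(S) = 0 unless 1 ≤ |S| ≤ 2, every t ≥ 0, and every p with 1 ≤ p ≤ ∞, one has ‖e^{tΔ_γ} f‖_p ≤ e^{−c_γ t} ‖f‖_p. -/
open Finset MeasureTheory Real

noncomputable section

open ENNReal in
/-- The `L^p` norm on the Hamming cube for `p ∈ [1, ∞]`, including `p = ∞`
(where it is the sup norm). -/
def pNormE {n : ℕ} (p : ℝ≥0∞) (f : (Fin n → Bool) → ℝ) : ℝ :=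
  if p = ∞ then ⨆ x : Fin n → Bool, |f x|
  else (cubeE fun x => |f x| ^ p.toReal) ^ (1 / p.toReal)

/-!
On the Walsh monomials of odd (even) degree the antipodal map `x ↦ -x` acts by `-1` (by `1`).
Hence, on functions supported on one odd and one even level, a Fourier multiplier taking the
values `u` and `v` there is `f(x) ↦ (u + v)/2 · f(x) + (v - u)/2 · f(-x)`. As `x ↦ -x` preserves
every `L^p` norm, the operator norm is at most `(|u + v| + |v - u|)/2 = max |u| |v|`, the same
bound as in `L²`.
-/

section LevelMultiplier

variable {n : ℕ}

theorem sum_walsh_mul_walsh (x y : Fin n → Bool) :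
    ∑ S, walsh S y * walsh S x = if y = x then (2 : ℝ) ^ n else 0 := by
  have factorization : ∑ S, walsh S y * walsh S x =
      ∏ i, (1 + (if y i then (1 : ℝ) else -1) * (if x i then (1 : ℝ) else -1)) := by
    simp only [walsh, Finset.prod_one_add, Finset.powerset_univ, Finset.prod_mul_distrib]
  rw [factorization]
  split_ifs with h
  · subst h
    have factor_eq_two (i : Fin n) :
        1 + (if y i then (1 : ℝ) else -1) * (if y i then (1 : ℝ) else -1) = 2 := by
      split_ifs <;> norm_num
    simp only [factor_eq_two, Finset.prod_const, Finset.card_univ, Fintype.card_fin]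
  · obtain ⟨i, hi⟩ := Function.ne_iff.mp h
    have factor_eq_zero :
        1 + (if y i then (1 : ℝ) else -1) * (if x i then (1 : ℝ) else -1) = 0 := by
      cases hy : y i <;> cases hx : x i <;> simp_all
    exact Finset.prod_eq_zero (Finset.mem_univ i) factor_eq_zero

theorem sum_cubeFourier_mul_walsh (f : (Fin n → Bool) → ℝ) (x : Fin n → Bool) :
    ∑ S, cubeFourier f S * walsh S x = f x := by
  calc ∑ S, cubeFourier f S * walsh S x
      = ∑ S, ∑ y, f y / 2 ^ n * (walsh S y * walsh S x) := by
        refine Finset.sum_congr rfl fun S _ => ?_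
        rw [cubeFourier, cubeE, Finset.sum_div, Finset.sum_mul]
        exact Finset.sum_congr rfl fun y _ => by ring
    _ = ∑ y, f y / 2 ^ n * ∑ S, walsh S y * walsh S x := by
        rw [Finset.sum_comm]
        simp only [Finset.mul_sum]
    _ = f x := by simp [sum_walsh_mul_walsh]

-- The complement in the Boolean algebra `Fin n → Bool` is the antipodal map `x ↦ -x` of the cube.
theorem walsh_compl (S : Finset (Fin n)) (x : Fin n → Bool) :
    walsh S xᶜ = (-1) ^ #S * walsh S x := by
  rw [walsh, walsh, ← Finset.prod_const, ← Finset.prod_mul_distrib]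
  refine Finset.prod_congr rfl fun i _ => ?_
  cases h : x i <;> simp [h]

/-- The Fourier multiplier `f ↦ Σ_S m(|S|) f̂(S) x^S`, whose symbol depends only on the level `|S|`.
The semigroup `heatFrac γ t` is the case `m k = e^{-t k^γ}`, by definition. -/
def levelMultiplier (m : ℕ → ℝ) (f : (Fin n → Bool) → ℝ) (x : Fin n → Bool) : ℝ :=
  ∑ S : Finset (Fin n), m #S * cubeFourier f S * walsh S x

theorem levelMultiplier_apply_of_odd_of_even {f : (Fin n → Bool) → ℝ} {j k : ℕ}
    (hj : Odd j) (hk : Even k) (hf : ∀ S, #S ≠ j → #S ≠ k → cubeFourier f S = 0)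
    (m : ℕ → ℝ) (x : Fin n → Bool) :
    levelMultiplier m f x = (m j + m k) / 2 * f x + (m k - m j) / 2 * f xᶜ := by
  rw [← sum_cubeFourier_mul_walsh f x, ← sum_cubeFourier_mul_walsh f xᶜ, levelMultiplier,
    Finset.mul_sum, Finset.mul_sum, ← Finset.sum_add_distrib]
  refine Finset.sum_congr rfl fun S _ => ?_
  rw [walsh_compl]
  by_cases hSj : #S = j
  · rw [hSj, hj.neg_one_pow]
    ring
  by_cases hSk : #S = k
  · rw [hSk, hk.neg_one_pow]
    ring
  · rw [hf S hSj hSk]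
    ring

-- At `p = ∞` the normalizing factor is `1`, since `1 / (∞ : ℝ≥0∞).toReal = 1 / 0 = 0`.
theorem pNormE_eq_mul_norm_toLp (p : ENNReal) [Fact (1 ≤ p)] (f : (Fin n → Bool) → ℝ) :
    pNormE p f = ((2 : ℝ) ^ n)⁻¹ ^ (1 / p.toReal) * ‖WithLp.toLp p f‖ := by
  by_cases hp : p = ⊤
  · subst hp
    simp [pNormE, PiLp.norm_eq_ciSup]
  · have p_pos : 0 < p.toReal :=
      ENNReal.toReal_pos (zero_lt_one.trans_le Fact.out).ne' hp
    rw [pNormE, if_neg hp, cubeE, PiLp.norm_eq_sum p_pos, div_eq_inv_mul,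
      Real.mul_rpow (by positivity) (by positivity)]
    simp only [Real.norm_eq_abs]

theorem norm_toLp_comp_equiv {ι ι' E : Type*} [Fintype ι] [Fintype ι'] [NormedAddCommGroup E]
    [NormedSpace ℝ E] (p : ENNReal) [Fact (1 ≤ p)] (e : ι' ≃ ι) (f : ι → E) :
    ‖WithLp.toLp p (f ∘ e)‖ = ‖WithLp.toLp p f‖ :=
  (LinearIsometryEquiv.piLpCongrLeft p ℝ E e.symm).norm_map (WithLp.toLp p f)

theorem pNormE_mul_add_mul_comp_le {p : ENNReal} (hp : 1 ≤ p) (a b : ℝ)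
    (f : (Fin n → Bool) → ℝ) (e : Equiv.Perm (Fin n → Bool)) :
    pNormE p (fun x => a * f x + b * f (e x)) ≤ (|a| + |b|) * pNormE p f := by
  have : Fact (1 ≤ p) := ⟨hp⟩
  have norm_le : ‖WithLp.toLp p fun x => a * f x + b * f (e x)‖ ≤
      (|a| + |b|) * ‖WithLp.toLp p f‖ :=
    calc ‖WithLp.toLp p fun x => a * f x + b * f (e x)‖
        = ‖a • WithLp.toLp p f + b • WithLp.toLp p (f ∘ e)‖ := rfl
      _ ≤ ‖a • WithLp.toLp p f‖ + ‖b • WithLp.toLp p (f ∘ e)‖ := norm_add_le _ _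
      _ = (|a| + |b|) * ‖WithLp.toLp p f‖ := by
        rw [norm_smul, norm_smul, norm_toLp_comp_equiv, Real.norm_eq_abs, Real.norm_eq_abs,
          add_mul]
  rw [pNormE_eq_mul_norm_toLp, pNormE_eq_mul_norm_toLp, mul_left_comm]
  gcongr

theorem abs_add_half_add_abs_sub_half {α : Type*} [Field α] [LinearOrder α]
    [IsStrictOrderedRing α] (u v : α) :
    |(u + v) / 2| + |(v - u) / 2| = max |u| |v| := by
  grind

theorem pNormE_levelMultiplier_le {p : ENNReal} (hp : 1 ≤ p) {f : (Fin n → Bool) → ℝ} {j k : ℕ}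
    (hj : Odd j) (hk : Even k) (hf : ∀ S, #S ≠ j → #S ≠ k → cubeFourier f S = 0) (m : ℕ → ℝ) :
    pNormE p (levelMultiplier m f) ≤ max |m j| |m k| * pNormE p f := by
  rw [funext (levelMultiplier_apply_of_odd_of_even hj hk hf m),
    ← abs_add_half_add_abs_sub_half]
  exact pNormE_mul_add_mul_comp_le hp _ _ f compl_involutive.toPerm

theorem pNormE_heatFrac_le (γ : ℝ) {t : ℝ} (ht : 0 ≤ t) {p : ENNReal} (hp : 1 ≤ p)
    {f : (Fin n → Bool) → ℝ} {j k : ℕ} (hj : Odd j) (hk : Even k)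
    (hf : ∀ S, #S ≠ j → #S ≠ k → cubeFourier f S = 0) :
    pNormE p (heatFrac γ t f) ≤ Real.exp (-min ((j : ℝ) ^ γ) ((k : ℝ) ^ γ) * t) * pNormE p f := by
  have symbol_antitone : Antitone fun s : ℝ => Real.exp (-t * s) := fun r s hrs =>
    Real.exp_le_exp.mpr (mul_le_mul_of_nonpos_left hrs (neg_nonpos.mpr ht))
  calc pNormE p (heatFrac γ t f)
      ≤ max |Real.exp (-t * (j : ℝ) ^ γ)| |Real.exp (-t * (k : ℝ) ^ γ)| * pNormE p f :=
        pNormE_levelMultiplier_le hp hj hk hf fun l => Real.exp (-t * (l : ℝ) ^ γ)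
    _ = Real.exp (-min ((j : ℝ) ^ γ) ((k : ℝ) ^ γ) * t) * pNormE p f := by
        rw [Real.abs_exp, Real.abs_exp, ← symbol_antitone.map_min, neg_mul_comm, mul_comm t]

end LevelMultiplier

theorem stmt14_general (γ : ℝ) {j k : ℕ} (hj : Odd j) (hk : Even k) (hk0 : k ≠ 0) :
    ∃ c : ℝ, 0 < c ∧
      ∀ (n : ℕ) (f : (Fin n → Bool) → ℝ),
        (∀ S, #S ≠ j → #S ≠ k → cubeFourier f S = 0) →
        ∀ t : ℝ, 0 ≤ t → ∀ p : ENNReal, 1 ≤ p →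
          pNormE p (heatFrac γ t f) ≤ Real.exp (-c * t) * pNormE p f := by
  have j_pos : 0 < j := hj.pos
  exact ⟨min ((j : ℝ) ^ γ) ((k : ℝ) ^ γ), by positivity,
    fun n f hf t ht p hp => pNormE_heatFrac_le γ ht hp hj hk hf⟩

open ENNReal in
/-- Spectral gap in every `L^p`, `1 ≤ p ≤ ∞`, for band-limited functions: for
`0 < γ < 1` there is `c_γ > 0` depending only on `γ` such that for every `n`,
every `f : C_n → ℝ` with `f̂(S) = 0` unless `1 ≤ |S| ≤ 2`, every `t ≥ 0`, and
every `1 ≤ p ≤ ∞`, `‖e^{tΔ_γ} f‖_p ≤ e^{-c_γ t} ‖f‖_p`. -/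
theorem stmt14 (γ : ℝ) (hγ0 : 0 < γ) (hγ1 : γ < 1) :
    ∃ c : ℝ, 0 < c ∧
      ∀ (n : ℕ) (f : (Fin n → Bool) → ℝ),
        (∀ S : Finset (Fin n), ¬(1 ≤ S.card ∧ S.card ≤ 2) → cubeFourier f S = 0) →
        ∀ t : ℝ, 0 ≤ t →
          ∀ p : ℝ≥0∞, 1 ≤ p → p ≤ ∞ →
            pNormE p (heatFrac γ t f) ≤ Real.exp (-c * t) * pNormE p f := by
  obtain ⟨c, c_pos, gap⟩ := stmt14_general γ odd_one even_two two_ne_zero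
  exact ⟨c, c_pos, fun n f hf t ht p hp _ => gap n f (fun S _ _ => hf S (by omega)) t ht p hp⟩
end
end
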